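/- If B ⊂ ℍ has horizontal super-linear growth, then H_B(x) = 0 for every x ∈ B. -/

import Mathlib

open Filter
open scoped ENNReal

namespace SHM

/-- The upper half planar lattice `ℍ = {(x₁,x₂) ∈ ℤ² : x₂ ≥ 0}` (including the x-axis). -/
def upperH : Set (ℤ × ℤ) := {p | 0 ≤ p.2}

/-- The horizontal line `L_n = {(x,n) : x ∈ ℤ}` of height `n`. -/
def lineH (n : ℤ) : Set (ℤ × ℤ) := {p | p.2 = n}

/-- The four unit steps of the planar simple random walk. -/
def dirs : Finset (ℤ × ℤ) := {(1,0), (-1,0), (0,1), (0,-1)}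

/-- The position after `m` steps of the walk started at `z` whose first `n`
increments are given by `σ`. -/
def pos (z : ℤ × ℤ) {n : ℕ} (σ : Fin n → ℤ × ℤ) (m : ℕ) : ℤ × ℤ :=
  z + ∑ i ∈ Finset.univ.filter (fun i : Fin n => (i : ℕ) < m), σ i

/-- The probability that the first `n` increments of the simple random walk
(each uniform on the four unit vectors) satisfy the predicate `E`. -/
noncomputable def stepProb (n : ℕ) (E : (Fin n → ℤ × ℤ) → Prop) : ℝ :=
  (Nat.card {σ : Fin n → ↥dirs // E fun i => ((σ i : ℤ × ℤ))} : ℝ) / 4 ^ n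

/-- `P_z(S_{τ̄_A} = x)` : the walk started at `z` hits `A` (in finite time) for the
first time precisely at the point `x`.  Here `τ̄_A = min {m ≥ 0 : S_m ∈ A}`. -/
noncomputable def hitProb (z : ℤ × ℤ) (A : Set (ℤ × ℤ)) (x : ℤ × ℤ) : ℝ :=
  ∑' n : ℕ, stepProb n fun σ =>
    pos z σ n = x ∧ x ∈ A ∧ ∀ m < n, pos z σ m ∉ A

/-- `P_z(τ̄_A < τ̄_B)` : the walk started at `z` hits `A` strictly before hitting `B`. -/
noncomputable def hitBeforeProb (z : ℤ × ℤ) (A B : Set (ℤ × ℤ)) : ℝ :=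
  ∑' n : ℕ, stepProb n fun σ =>
    pos z σ n ∈ A ∧ pos z σ n ∉ B ∧ ∀ m < n, pos z σ m ∉ A ∧ pos z σ m ∉ B

/-- The stationary harmonic measure `H_{B,N}(x) = Σ_{z ∈ L_N \ B} P_z(S_{τ̄_{B ∪ L₀}} = x)`. -/
noncomputable def harm (B : Set (ℤ × ℤ)) (N : ℕ) (x : ℤ × ℤ) : ℝ :=
  ∑' z : ↥(lineH (N : ℤ) \ B), hitProb (z : ℤ × ℤ) (B ∪ lineH 0) x

/-- `h_{x₁} = sup {x₂ ≥ 0 : {x₁} × [1, x₂] ⊂ B}`, the height of the full column of `B`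
above `x₁` (valued in `ℝ≥0∞` so that an infinite column has height `∞`). -/
noncomputable def colHeight (B : Set (ℤ × ℤ)) (x₁ : ℤ) : ℝ≥0∞ :=
  ⨆ (x₂ : ℕ) (_ : ∀ j : ℤ, 1 ≤ j → j ≤ (x₂ : ℤ) → (x₁, j) ∈ B), (x₂ : ℝ≥0∞)

/-- `B` has horizontal super-linear growth if there are constants `c ∈ (0,∞)` and `M < ∞`
such that `h_{x₁} ≥ c|x₁|` for all `|x₁| ≥ M`. -/
def HorizontalSuperLinear (B : Set (ℤ × ℤ)) : Prop :=
  ∃ c : ℝ, 0 < c ∧ ∃ M : ℝ, ∀ x₁ : ℤ, M ≤ |(x₁ : ℝ)| →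
    ENNReal.ofReal (c * |(x₁ : ℝ)|) ≤ colHeight B x₁

/-! The sum defining `H_{B,N}(x)` is, by time reversal, the expected number of visits to `L_N \ B`
of the walk leaving `x` before it returns to `B ∪ L₀`. It is therefore at most the sum over the
neighbours of `x` of any nonnegative `G` whose discrete Laplacian `∑ G (w + d) - 4 G w` is at most
`-1` on `L_N \ B` and at most `0` elsewhere off `B ∪ L₀`. Super-linear growth confines the
complement of `B` above the axis to a cone `c |a| ≤ y + R`. If `R` is large, then on
that cone `Y log Y - a² / Y`, with `Y = y + R`, is superharmonic and at least `Y log Y / 2`, so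
`2 / log (N + R)` times it exceeds `N` at height `N`. Capping it by `min y N`, whose Laplacian is
`-1` on `L_N`, gives an admissible `G` which near `x` is of order `1 / log N`. -/

/-- The sum of `f` over the four neighbours of `z`, that is, four times the one-step average
`E_z[f(S_1)]`; leaving out the factor `1/4` avoids division in `ℝ≥0∞`. -/
def nbrSum {α : Type*} [AddCommMonoid α] (f : ℤ × ℤ → α) (z : ℤ × ℤ) : α :=
  ∑ d ∈ dirs, f (z + d)

lemma nbrSum_mk {α : Type*} [AddCommMonoid α] (f : ℤ × ℤ → α) (a y : ℤ) :
    nbrSum f (a, y) = f (a + 1, y) + (f (a - 1, y) + (f (a, y + 1) + f (a, y - 1))) := by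
  unfold nbrSum dirs
  rw [Finset.sum_insert (by decide), Finset.sum_insert (by decide), Finset.sum_insert (by decide),
    Finset.sum_singleton]
  simp [sub_eq_add_neg]

lemma nbrSum_eq_sum_sub {α : Type*} [AddCommMonoid α] (f : ℤ × ℤ → α) (z : ℤ × ℤ) :
    nbrSum f z = ∑ d ∈ dirs, f (z - d) :=
  Finset.sum_equiv (Equiv.neg _) (by simp [dirs]; grind) (by simp)

lemma nbrSum_mono {α : Type*} [AddCommMonoid α] [PartialOrder α] [IsOrderedAddMonoid α]
    {f g : ℤ × ℤ → α} (h : ∀ p, f p ≤ g p) (z : ℤ × ℤ) : nbrSum f z ≤ nbrSum g z :=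
  Finset.sum_le_sum fun _ _ => h _

lemma nbrSum_nonneg {α : Type*} [AddCommMonoid α] [PartialOrder α] [IsOrderedAddMonoid α]
    {f : ℤ × ℤ → α} {z : ℤ × ℤ} (hf : ∀ d ∈ dirs, 0 ≤ f (z + d)) : 0 ≤ nbrSum f z :=
  Finset.sum_nonneg hf

lemma nbrSum_const_mul {α : Type*} [NonUnitalNonAssocSemiring α] (k : α) (f : ℤ × ℤ → α)
    (z : ℤ × ℤ) : nbrSum (fun p => k * f p) z = k * nbrSum f z :=
  (Finset.mul_sum _ _ _).symm

lemma nbrSum_ofReal {f : ℤ × ℤ → ℝ} {z : ℤ × ℤ} (hf : ∀ d ∈ dirs, 0 ≤ f (z + d)) :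
    nbrSum (fun p => ENNReal.ofReal (f p)) z = ENNReal.ofReal (nbrSum f z) :=
  (ENNReal.ofReal_sum_of_nonneg hf).symm

lemma tsum_mul_nbrSum (F G : ℤ × ℤ → ℝ≥0∞) :
    ∑' z, G z * nbrSum F z = ∑' z, nbrSum G z * F z :=
  calc ∑' z, G z * nbrSum F z
      = ∑ d ∈ dirs, ∑' z, G z * F (z + d) := by
        simp only [nbrSum, Finset.mul_sum]
        exact Summable.tsum_finsetSum fun _ _ => ENNReal.summable
    _ = ∑ d ∈ dirs, ∑' w, G (w - d) * F w := by
        refine Finset.sum_congr rfl fun d _ => ?_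
        rw [← (Equiv.addRight d).tsum_eq fun w => G (w - d) * F w]
        simp
    _ = ∑' z, nbrSum G z * F z := by
        simp only [nbrSum_eq_sum_sub G, Finset.sum_mul]
        exact (Summable.tsum_finsetSum fun _ _ => ENNReal.summable).symm

lemma pos_zero (z : ℤ × ℤ) {n : ℕ} (σ : Fin n → ℤ × ℤ) : pos z σ 0 = z := by
  simp [pos]

lemma pos_cons (z d : ℤ × ℤ) {n : ℕ} (σ : Fin n → ℤ × ℤ) (m : ℕ) :
    pos z (Fin.cons d σ : Fin (n + 1) → ℤ × ℤ) (m + 1) = pos (z + d) σ m := by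
  simp only [pos, Finset.sum_filter, Fin.sum_univ_succ]
  simp [add_assoc]

lemma stepProb_nonneg (n : ℕ) (E : (Fin n → ℤ × ℤ) → Prop) : 0 ≤ stepProb n E := by
  unfold stepProb; positivity

lemma stepProb_le_one (n : ℕ) (E : (Fin n → ℤ × ℤ) → Prop) : stepProb n E ≤ 1 := by
  have hcard : Nat.card {σ : Fin n → ↥dirs // E fun i => (σ i : ℤ × ℤ)} ≤ 4 ^ n := by
    refine (Finite.card_subtype_le _).trans_eq ?_
    rw [Nat.card_fun, Nat.card_eq_finsetCard, Nat.card_fin]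
    rfl
  unfold stepProb
  rw [div_le_one (by positivity)]
  exact_mod_cast hcard

lemma stepProb_eq_zero {n : ℕ} {E : (Fin n → ℤ × ℤ) → Prop} (h : ∀ σ, ¬ E σ) :
    stepProb n E = 0 := by
  simp [stepProb, h]

lemma card_steps_succ (n : ℕ) (E : (Fin (n + 1) → ℤ × ℤ) → Prop) :
    Nat.card {σ : Fin (n + 1) → ↥dirs // E fun i => (σ i : ℤ × ℤ)}
      = ∑ d ∈ dirs, Nat.card {σ : Fin n → ↥dirs // E (Fin.cons d fun i => (σ i : ℤ × ℤ))} := by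
  rw [← Finset.sum_coe_sort dirs, ← Nat.card_sigma]
  refine (Nat.card_congr ?_).symm
  refine (Equiv.subtypeProdEquivSigmaSubtype fun (d : ↥dirs) (σ : Fin n → ↥dirs) =>
    E (Fin.cons (d : ℤ × ℤ) fun i => (σ i : ℤ × ℤ))).symm.trans
      ((Fin.consEquiv fun _ => ↥dirs).subtypeEquiv fun p => ?_)
  rw [show (Fin.cons (p.1 : ℤ × ℤ) fun i => (p.2 i : ℤ × ℤ) : Fin (n + 1) → ℤ × ℤ) =
    fun i => ((Fin.consEquiv (fun _ => ↥dirs) p i : ↥dirs) : ℤ × ℤ) from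
      funext (Fin.cases rfl fun _ => rfl)]

lemma four_mul_stepProb_succ (n : ℕ) (E : (Fin (n + 1) → ℤ × ℤ) → Prop) :
    4 * stepProb (n + 1) E = ∑ d ∈ dirs, stepProb n fun σ => E (Fin.cons d σ) := by
  unfold stepProb
  rw [card_steps_succ, Nat.cast_sum, ← Finset.sum_div, pow_succ]
  field_simp

/-- The probability `P_z(τ̄_A = n, S_n = x)` that the walk started at `z` first meets `A` at time
`n` and at the point `x`, in `ℝ≥0∞` so that sums can be rearranged freely. -/
noncomputable def firstHit (A : Set (ℤ × ℤ)) (x : ℤ × ℤ) (n : ℕ) (z : ℤ × ℤ) : ℝ≥0∞ :=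
  ENNReal.ofReal (stepProb n fun σ => pos z σ n = x ∧ x ∈ A ∧ ∀ m < n, pos z σ m ∉ A)

section FirstHit

variable {A : Set (ℤ × ℤ)} {x z : ℤ × ℤ}

lemma firstHit_le_one (A : Set (ℤ × ℤ)) (x : ℤ × ℤ) (n : ℕ) (z : ℤ × ℤ) :
    firstHit A x n z ≤ 1 :=
  ENNReal.ofReal_le_one.2 (stepProb_le_one _ _)

lemma firstHit_zero_of_ne (hz : z ≠ x) : firstHit A x 0 z = 0 := by
  rw [firstHit, stepProb_eq_zero, ENNReal.ofReal_zero]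
  rintro σ ⟨hσ, -⟩
  exact hz (pos_zero z σ ▸ hσ)

lemma firstHit_zero_of_notMem (hz : z ∉ A) : firstHit A x 0 z = 0 := by
  rw [firstHit, stepProb_eq_zero, ENNReal.ofReal_zero]
  rintro σ ⟨hσ, hx, -⟩
  exact hz (pos_zero z σ ▸ hσ ▸ hx)

lemma firstHit_succ_of_mem (n : ℕ) (hz : z ∈ A) : firstHit A x (n + 1) z = 0 := by
  rw [firstHit, stepProb_eq_zero, ENNReal.ofReal_zero]
  rintro σ ⟨-, -, hσ⟩
  exact hσ 0 n.succ_pos ((pos_zero z σ).symm ▸ hz)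

lemma four_mul_firstHit_succ (n : ℕ) (hz : z ∉ A) :
    4 * firstHit A x (n + 1) z = nbrSum (firstHit A x n) z := by
  have hcons (d : ℤ × ℤ) (σ : Fin n → ℤ × ℤ) :
      (∀ m < n + 1, pos z (Fin.cons d σ : Fin (n + 1) → ℤ × ℤ) m ∉ A) ↔
        ∀ m < n, pos (z + d) σ m ∉ A := by
    simp only [Nat.forall_lt_succ_left, pos_zero, pos_cons, hz, not_false_eq_true, true_and]
  unfold firstHit
  rw [nbrSum_ofReal fun _ _ => stepProb_nonneg _ _, ← ENNReal.ofReal_ofNat 4,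
    ← ENNReal.ofReal_mul (by norm_num), four_mul_stepProb_succ]
  simp only [pos_cons, hcons, nbrSum]

lemma four_mul_firstHit_succ_le (A : Set (ℤ × ℤ)) (x : ℤ × ℤ) (n : ℕ) (z : ℤ × ℤ) :
    4 * firstHit A x (n + 1) z ≤ nbrSum (firstHit A x n) z := by
  by_cases hz : z ∈ A
  · simp [firstHit_succ_of_mem n hz]
  · exact (four_mul_firstHit_succ n hz).le

variable {G I : ℤ × ℤ → ℝ≥0∞}

lemma tsum_nbrSum_mul_firstHit_zero_le (G : ℤ × ℤ → ℝ≥0∞) (A : Set (ℤ × ℤ)) (x : ℤ × ℤ) :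
    ∑' z, nbrSum G z * firstHit A x 0 z ≤ nbrSum G x := by
  rw [tsum_eq_single x fun z hz => by rw [firstHit_zero_of_ne hz, mul_zero]]
  exact mul_le_of_le_one_right' (firstHit_le_one A x 0 x)

lemma tsum_nbrSum_mul_firstHit_succ_add_le (h : ∀ w ∉ A, nbrSum G w + I w ≤ 4 * G w)
    (x : ℤ × ℤ) (n : ℕ) :
    ∑' z, nbrSum G z * firstHit A x (n + 1) z + ∑' z, I z * firstHit A x (n + 1) z
      ≤ ∑' z, nbrSum G z * firstHit A x n z :=
  calc ∑' z, nbrSum G z * firstHit A x (n + 1) z + ∑' z, I z * firstHit A x (n + 1) z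
      = ∑' z, (nbrSum G z + I z) * firstHit A x (n + 1) z := by
        simp only [add_mul, ENNReal.tsum_add]
    _ ≤ ∑' z, 4 * G z * firstHit A x (n + 1) z := by
        refine ENNReal.tsum_le_tsum fun z => ?_
        by_cases hz : z ∈ A
        · simp [firstHit_succ_of_mem n hz]
        · gcongr
          exact h z hz
    _ = ∑' z, G z * (4 * firstHit A x (n + 1) z) := by simp only [mul_assoc, mul_left_comm]
    _ ≤ ∑' z, G z * nbrSum (firstHit A x n) z := by
        gcongr with z
        exact four_mul_firstHit_succ_le A x n z
    _ = ∑' z, nbrSum G z * firstHit A x n z := tsum_mul_nbrSum _ _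

lemma tsum_mul_firstHit_le (hI : ∀ w ∈ A, I w = 0) (h : ∀ w ∉ A, nbrSum G w + I w ≤ 4 * G w)
    (x : ℤ × ℤ) : ∑' n, ∑' z, I z * firstHit A x n z ≤ nbrSum G x := by
  have hzero : ∑' z, I z * firstHit A x 0 z = 0 := by
    refine ENNReal.tsum_eq_zero.2 fun z => ?_
    by_cases hz : z ∈ A
    · rw [hI z hz, zero_mul]
    · rw [firstHit_zero_of_notMem hz, mul_zero]
  have hpartial (k : ℕ) : ∑' z, nbrSum G z * firstHit A x k z
      + ∑ n ∈ Finset.range k, ∑' z, I z * firstHit A x (n + 1) z ≤ nbrSum G x := by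
    induction k with
    | zero => simpa using tsum_nbrSum_mul_firstHit_zero_le G A x
    | succ k ih =>
      rw [Finset.sum_range_succ, add_left_comm, add_comm]
      grw [tsum_nbrSum_mul_firstHit_succ_add_le h x k]
      exact ih
  rw [tsum_eq_zero_add' ENNReal.summable, hzero, zero_add]
  exact ENNReal.summable.tsum_le_of_sum_range_le fun k => le_add_self.trans (hpartial k)

end FirstHit

lemma ofReal_tsum_le_tsum_ofReal {ι : Type*} {f : ι → ℝ} (hf : ∀ i, 0 ≤ f i) :
    ENNReal.ofReal (∑' i, f i) ≤ ∑' i, ENNReal.ofReal (f i) := by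
  by_cases hs : Summable f
  · exact (ENNReal.ofReal_tsum_of_nonneg hf hs).le
  · simp [tsum_eq_zero_of_not_summable hs]

lemma hitProb_nonneg (z : ℤ × ℤ) (A : Set (ℤ × ℤ)) (x : ℤ × ℤ) : 0 ≤ hitProb z A x :=
  tsum_nonneg fun _ => stepProb_nonneg _ _

lemma harm_nonneg (B : Set (ℤ × ℤ)) (N : ℕ) (x : ℤ × ℤ) : 0 ≤ harm B N x :=
  tsum_nonneg fun _ => hitProb_nonneg _ _ _

lemma ofReal_harm_le_tsum (B : Set (ℤ × ℤ)) (N : ℕ) (x : ℤ × ℤ) :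
    ENNReal.ofReal (harm B N x) ≤
      ∑' n, ∑' z, (lineH N \ B).indicator 1 z * firstHit (B ∪ lineH 0) x n z :=
  calc ENNReal.ofReal (harm B N x)
      ≤ ∑' z : ↥(lineH (N : ℤ) \ B), ∑' n, firstHit (B ∪ lineH 0) x n z := by
        refine (ofReal_tsum_le_tsum_ofReal fun _ => hitProb_nonneg _ _ _).trans ?_
        gcongr with z
        exact ofReal_tsum_le_tsum_ofReal fun _ => stepProb_nonneg _ _
    _ = ∑' z, (lineH N \ B).indicator 1 z * ∑' n, firstHit (B ∪ lineH 0) x n z := by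
        classical
        rw [tsum_subtype (lineH (N : ℤ) \ B) fun z => ∑' n, firstHit (B ∪ lineH 0) x n z]
        simp only [Set.indicator_apply, Pi.one_apply, ite_mul, one_mul, zero_mul]
    _ = ∑' n, ∑' z, (lineH N \ B).indicator 1 z * firstHit (B ∪ lineH 0) x n z := by
        simp only [← ENNReal.tsum_mul_left]
        exact ENNReal.tsum_comm

lemma ofReal_harm_le_nbrSum {B : Set (ℤ × ℤ)} {N : ℕ} (hN : N ≠ 0) {G : ℤ × ℤ → ℝ≥0∞}
    (h : ∀ w ∉ B ∪ lineH 0, nbrSum G w + (lineH N \ B).indicator 1 w ≤ 4 * G w) (x : ℤ × ℤ) :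
    ENNReal.ofReal (harm B N x) ≤ nbrSum G x := by
  refine (ofReal_harm_le_tsum B N x).trans (tsum_mul_firstHit_le (fun w hw => ?_) h x)
  refine Set.indicator_of_notMem ?_ _
  rintro ⟨hwN, hwB⟩
  have hw0 := hw.resolve_left hwB
  exact hN (by exact_mod_cast hwN.symm.trans hw0)

/-- The function `Y log Y - a² / Y`, superharmonic for the simple random walk in `(a, Y)`: the
second difference of `Y log Y` is at most `2 / Y`, which the term `a² / Y` compensates. -/
noncomputable def logBarrier (a Y : ℝ) : ℝ := Y * Real.log Y - a ^ 2 / Y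

lemma mul_log_add_one_add_mul_log_sub_one_le {Y : ℝ} (hY : 1 < Y) :
    (Y + 1) * Real.log (Y + 1) + (Y - 1) * Real.log (Y - 1) ≤ 2 * (Y * Real.log Y) + 2 / Y := by
  have hlog {t : ℝ} (ht : 0 < t) : Real.log t ≤ Real.log Y + (t / Y - 1) := by
    have := Real.log_le_sub_one_of_pos (div_pos ht (zero_lt_one.trans hY))
    rw [Real.log_div ht.ne' (by positivity)] at this
    linarith
  calc (Y + 1) * Real.log (Y + 1) + (Y - 1) * Real.log (Y - 1)
      ≤ (Y + 1) * (Real.log Y + ((Y + 1) / Y - 1))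
        + (Y - 1) * (Real.log Y + ((Y - 1) / Y - 1)) := by
        gcongr
        · exact hlog (by linarith)
        · exact hlog (sub_pos.2 hY)
    _ = 2 * (Y * Real.log Y) + 2 / Y := by field

lemma two_div_le_one_div_add_one_div {Y : ℝ} (hY : 1 < Y) :
    2 / Y ≤ 1 / (Y + 1) + 1 / (Y - 1) := by
  have hY1 : 0 < Y - 1 := sub_pos.2 hY
  rw [div_add_div _ _ (by positivity) hY1.ne', div_le_div_iff₀ (by positivity) (by positivity)]
  linarith

lemma logBarrier_superharmonic (a : ℝ) {Y : ℝ} (hY : 1 < Y) :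
    logBarrier (a + 1) Y + (logBarrier (a - 1) Y + (logBarrier a (Y + 1) + logBarrier a (Y - 1)))
      ≤ 4 * logBarrier a Y := by
  have hlog := mul_log_add_one_add_mul_log_sub_one_le hY
  have hinv := mul_le_mul_of_nonneg_left (two_div_le_one_div_add_one_div hY) (sq_nonneg a)
  have hsq : (a + 1) ^ 2 / Y + (a - 1) ^ 2 / Y = a ^ 2 * (2 / Y) + 2 / Y := by ring
  simp only [logBarrier]
  linear_combination hlog + hinv - hsq

lemma half_mul_log_le_logBarrier {c a Y : ℝ} (hc : 0 < c) (hY : Real.exp (2 / c ^ 2) ≤ Y)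
    (ha : c * |a| ≤ Y) : Y * Real.log Y / 2 ≤ logBarrier a Y := by
  have hY0 : 0 < Y := (Real.exp_pos _).trans_le hY
  have hlog : 2 / c ^ 2 ≤ Real.log Y := (Real.le_log_iff_exp_le hY0).2 hY
  have hsq : a ^ 2 ≤ Y ^ 2 / c ^ 2 := by
    rw [← div_pow, ← sq_abs]
    gcongr
    rwa [le_div_iff₀' hc]
  have hquad : a ^ 2 / Y ≤ Y * Real.log Y / 2 :=
    calc a ^ 2 / Y ≤ Y ^ 2 / c ^ 2 / Y := by gcongr
      _ = Y * (2 / c ^ 2) / 2 := by field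
      _ ≤ Y * Real.log Y / 2 := by gcongr
  unfold logBarrier
  linarith

/-- The part of the upper half plane in the cone `c |a| ≤ y + R`, whose apex is at height `-R`. -/
def cone (c R : ℝ) : Set (ℤ × ℤ) := {p | 0 ≤ p.2 ∧ c * |(p.1 : ℝ)| ≤ p.2 + R}

lemma abs_le_one_of_mem_dirs {d : ℤ × ℤ} (hd : d ∈ dirs) : |d.1| ≤ 1 ∧ |d.2| ≤ 1 := by
  revert d; decide

lemma add_mem_cone {c C : ℝ} (hc : 0 ≤ c) {p d : ℤ × ℤ} (hp : 0 < p.2)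
    (hpC : c * |(p.1 : ℝ)| ≤ p.2 + C) (hd : |d.1| ≤ 1 ∧ |d.2| ≤ 1) :
    p + d ∈ cone c (C + c + 1) := by
  obtain ⟨hd₁, hd₂⟩ := hd
  have hd₁' : |(d.1 : ℝ)| ≤ 1 := by exact_mod_cast hd₁
  have hd₂' : -1 ≤ d.2 := (abs_le.1 hd₂).1
  have hd₂'' : -1 ≤ (d.2 : ℝ) := by exact_mod_cast hd₂'
  constructor
  · rw [Prod.snd_add]
    omega
  · push_cast [Prod.fst_add, Prod.snd_add]
    calc c * |(p.1 : ℝ) + d.1| ≤ c * (|(p.1 : ℝ)| + 1) := by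
          grw [abs_add_le, hd₁']
      _ ≤ p.2 + d.2 + (C + c + 1) := by linarith

lemma cone_mono (c : ℝ) {R R' : ℝ} (h : R ≤ R') : cone c R ⊆ cone c R' :=
  fun _ hp => ⟨hp.1, hp.2.trans (by gcongr)⟩

lemma colHeight_le_of_notMem {B : Set (ℤ × ℤ)} {a y : ℤ} (hy : 0 < y) (h : (a, y) ∉ B) :
    colHeight B a ≤ ENNReal.ofReal y := by
  refine iSup₂_le fun k hk => ?_
  have hky : (k : ℤ) ≤ y := by
    by_contra! hlt
    exact h (hk y hy hlt.le)
  rw [← ENNReal.ofReal_natCast]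
  exact ENNReal.ofReal_le_ofReal (by exact_mod_cast hky)

lemma HorizontalSuperLinear.exists_mul_abs_le_add {B : Set (ℤ × ℤ)}
    (hB : HorizontalSuperLinear B) :
    ∃ c > 0, ∃ C : ℝ, ∀ p ∉ B, 0 < p.2 → c * |(p.1 : ℝ)| ≤ p.2 + C := by
  obtain ⟨c, hc, M, hM⟩ := hB
  refine ⟨c, hc, c * |M|, fun p hpB hp => ?_⟩
  have hp' : (0 : ℝ) < p.2 := by exact_mod_cast hp
  rcases le_or_gt M |(p.1 : ℝ)| with hfar | hnear
  · have hcol := (hM p.1 hfar).trans (colHeight_le_of_notMem hp hpB)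
    exact ((ENNReal.ofReal_le_ofReal_iff hp'.le).1 hcol).trans
      (le_add_of_nonneg_right (by positivity))
  · grw [hnear, le_abs_self M]
    exact le_add_of_nonneg_left hp'.le

lemma HorizontalSuperLinear.exists_cone {B : Set (ℤ × ℤ)} (hB : HorizontalSuperLinear B) :
    ∃ c > 0, ∃ R, Real.exp (2 / c ^ 2) ≤ R ∧
      ∀ p ∉ B, 0 < p.2 → p ∈ cone c R ∧ ∀ d ∈ dirs, p + d ∈ cone c R := by
  obtain ⟨c, hc, C, hC⟩ := hB.exists_mul_abs_le_add
  refine ⟨c, hc, max (Real.exp (2 / c ^ 2)) (C + c + 1), le_max_left _ _, fun p hpB hp => ?_⟩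
  have hmem {d : ℤ × ℤ} (hd : |d.1| ≤ 1 ∧ |d.2| ≤ 1) :=
    cone_mono c (le_max_right (Real.exp (2 / c ^ 2)) _) (add_mem_cone hc.le hp (hC p hpB hp) hd)
  exact ⟨by simpa using hmem (d := 0) (by simp), fun d hd => hmem (abs_le_one_of_mem_dirs hd)⟩

/-- `logBarrier` seen from the apex of the cone, scaled so as to exceed the cap `min y N` at height
`N`, and capped there. -/
noncomputable def cappedBarrier (R : ℝ) (N : ℕ) (p : ℤ × ℤ) : ℝ :=
  min (2 / Real.log (N + R) * logBarrier p.1 (p.2 + R)) (min p.2 N)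

lemma cappedBarrier_le_barrier (R : ℝ) (N : ℕ) (p : ℤ × ℤ) :
    cappedBarrier R N p ≤ 2 / Real.log (N + R) * logBarrier p.1 (p.2 + R) :=
  min_le_left _ _

lemma cappedBarrier_le_cap (R : ℝ) (N : ℕ) (p : ℤ × ℤ) : cappedBarrier R N p ≤ min (p.2 : ℝ) N :=
  min_le_right _ _

lemma nbrSum_min_natCast_add_le (N : ℕ) (w : ℤ × ℤ) :
    nbrSum (fun p => min (p.2 : ℝ) N) w + (if w.2 = N then 1 else 0) ≤ 4 * min (w.2 : ℝ) N := by
  obtain ⟨a, y⟩ := w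
  have hint : min y (N : ℤ) + (min y N + (min (y + 1) N + min (y - 1) N))
      + (if y = N then 1 else 0) ≤ 4 * min y N := by
    split_ifs <;> omega
  rw [nbrSum_mk]
  exact_mod_cast hint

lemma nbrSum_logBarrier_le {R : ℝ} {w : ℤ × ℤ} (hw : 1 < w.2 + R) :
    nbrSum (fun p => logBarrier p.1 (p.2 + R)) w ≤ 4 * logBarrier w.1 (w.2 + R) := by
  obtain ⟨a, y⟩ := w
  have h := logBarrier_superharmonic a hw
  rw [nbrSum_mk]
  push_cast
  convert h using 5 <;> ring

section Supersolution

variable {c R : ℝ} {N : ℕ} {w : ℤ × ℤ}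

lemma one_lt_of_exp_le (hc : 0 < c) (hR : Real.exp (2 / c ^ 2) ≤ R) : 1 < R :=
  (Real.one_lt_exp_iff.2 (by positivity)).trans_le hR

lemma half_mul_log_le_logBarrier_of_mem_cone (hc : 0 < c) (hR : Real.exp (2 / c ^ 2) ≤ R)
    (hw : w ∈ cone c R) :
    (w.2 + R) * Real.log (w.2 + R) / 2 ≤ logBarrier w.1 (w.2 + R) := by
  have hw₂ : (0 : ℝ) ≤ w.2 := by exact_mod_cast hw.1
  exact half_mul_log_le_logBarrier hc (hR.trans (le_add_of_nonneg_left hw₂)) hw.2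

lemma cappedBarrier_nonneg (hc : 0 < c) (hR : Real.exp (2 / c ^ 2) ≤ R) (N : ℕ)
    (hw : w ∈ cone c R) : 0 ≤ cappedBarrier R N w := by
  have hR1 := one_lt_of_exp_le hc hR
  have hw₂ : (0 : ℝ) ≤ w.2 := by exact_mod_cast hw.1
  have hlogN : 0 ≤ Real.log (N + R) := Real.log_nonneg (by linarith [N.cast_nonneg (α := ℝ)])
  have hlogw : 0 ≤ Real.log (w.2 + R) := Real.log_nonneg (by linarith)
  have hbarrier : 0 ≤ logBarrier w.1 (w.2 + R) :=
    (by positivity : 0 ≤ (w.2 + R) * Real.log (w.2 + R) / 2).trans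
      (half_mul_log_le_logBarrier_of_mem_cone hc hR hw)
  unfold cappedBarrier
  positivity

lemma cappedBarrier_eq_of_height_eq (hc : 0 < c) (hR : Real.exp (2 / c ^ 2) ≤ R)
    (hw : w ∈ cone c R) (hwN : w.2 = N) : cappedBarrier R N w = min (w.2 : ℝ) N := by
  have hwN' : (w.2 : ℝ) = N := by exact_mod_cast hwN
  have hR1 := one_lt_of_exp_le hc hR
  have hlog : 0 < Real.log (N + R) := Real.log_pos (by linarith [N.cast_nonneg (α := ℝ)])
  refine min_eq_right ?_
  calc min (w.2 : ℝ) N ≤ N + R := (min_le_right _ _).trans (by linarith)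
    _ = 2 / Real.log (N + R) * ((w.2 + R) * Real.log (w.2 + R) / 2) := by rw [hwN']; field
    _ ≤ 2 / Real.log (N + R) * logBarrier w.1 (w.2 + R) := by
        gcongr
        exact half_mul_log_le_logBarrier_of_mem_cone hc hR hw

lemma nbrSum_cappedBarrier_add_le (hc : 0 < c) (hR : Real.exp (2 / c ^ 2) ≤ R) (N : ℕ)
    (hw : w ∈ cone c R) :
    nbrSum (cappedBarrier R N) w + (if w.2 = N then 1 else 0) ≤ 4 * cappedBarrier R N w := by
  have hR1 := one_lt_of_exp_le hc hR
  have hcap : nbrSum (cappedBarrier R N) w + (if w.2 = N then 1 else 0) ≤ 4 * min (w.2 : ℝ) N := by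
    grw [nbrSum_mono (cappedBarrier_le_cap R N) w]
    exact nbrSum_min_natCast_add_le N w
  by_cases hwN : w.2 = N
  · rwa [cappedBarrier_eq_of_height_eq hc hR hw hwN]
  · have hw₂ : (0 : ℝ) ≤ w.2 := by exact_mod_cast hw.1
    have hlog : 0 ≤ Real.log (N + R) := Real.log_nonneg (by linarith [N.cast_nonneg (α := ℝ)])
    have hbarrier : nbrSum (cappedBarrier R N) w
        ≤ 4 * (2 / Real.log (N + R) * logBarrier w.1 (w.2 + R)) := by
      grw [nbrSum_mono (cappedBarrier_le_barrier R N) w, nbrSum_const_mul,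
        nbrSum_logBarrier_le (by linarith), mul_left_comm]
    rw [if_neg hwN, add_zero] at hcap ⊢
    rw [cappedBarrier, mul_min_of_nonneg _ _ (by norm_num)]
    exact le_min hbarrier hcap

end Supersolution

/-- The function `G` of the comparison argument: the capped barrier on the complement of `B` above
the axis, and `0` elsewhere. -/
noncomputable def supersolution (B : Set (ℤ × ℤ)) (R : ℝ) (N : ℕ) : ℤ × ℤ → ℝ≥0∞ :=
  ({p | 0 < p.2} \ B).indicator fun p => ENNReal.ofReal (cappedBarrier R N p)

lemma supersolution_le (B : Set (ℤ × ℤ)) (R : ℝ) (N : ℕ) (p : ℤ × ℤ) :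
    supersolution B R N p ≤ ENNReal.ofReal (cappedBarrier R N p) :=
  Set.indicator_le_self' (fun _ _ => zero_le) p

lemma supersolution_of_nonpos (B : Set (ℤ × ℤ)) (R : ℝ) (N : ℕ) {p : ℤ × ℤ} (hp : p.2 ≤ 0) :
    supersolution B R N p = 0 :=
  Set.indicator_of_notMem (fun h => hp.not_gt h.1) _

section Comparison

variable {B : Set (ℤ × ℤ)} {c R : ℝ} {w : ℤ × ℤ}

lemma nbrSum_supersolution_add_le_of_pos (hc : 0 < c) (hR : Real.exp (2 / c ^ 2) ≤ R)
    (hcone : w ∈ cone c R ∧ ∀ d ∈ dirs, w + d ∈ cone c R) (N : ℕ) (hwB : w ∉ B) (hw : 0 < w.2) :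
    nbrSum (supersolution B R N) w + (lineH N \ B).indicator 1 w ≤ 4 * supersolution B R N w := by
  have hnonneg : ∀ d ∈ dirs, 0 ≤ cappedBarrier R N (w + d) :=
    fun d hd => cappedBarrier_nonneg hc hR N (hcone.2 d hd)
  have hind : (lineH N \ B).indicator 1 w = ENNReal.ofReal (if w.2 = N then 1 else 0) := by
    split_ifs with hwN <;> simp [lineH, hwB, hwN]
  have hw_eq : supersolution B R N w = ENNReal.ofReal (cappedBarrier R N w) :=
    Set.indicator_of_mem (s := {p : ℤ × ℤ | 0 < p.2} \ B) ⟨hw, hwB⟩ _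
  calc nbrSum (supersolution B R N) w + (lineH N \ B).indicator 1 w
      ≤ ENNReal.ofReal (nbrSum (cappedBarrier R N) w)
        + ENNReal.ofReal (if w.2 = N then 1 else 0) := by
        grw [nbrSum_mono (supersolution_le B R N) w, nbrSum_ofReal hnonneg, hind]
    _ = ENNReal.ofReal (nbrSum (cappedBarrier R N) w + if w.2 = N then 1 else 0) :=
        (ENNReal.ofReal_add (nbrSum_nonneg hnonneg) (by split_ifs <;> norm_num)).symm
    _ ≤ ENNReal.ofReal (4 * cappedBarrier R N w) :=
        ENNReal.ofReal_le_ofReal (nbrSum_cappedBarrier_add_le hc hR N hcone.1)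
    _ = 4 * supersolution B R N w := by
        rw [hw_eq, ENNReal.ofReal_mul (by norm_num), ENNReal.ofReal_ofNat]

lemma nbrSum_supersolution_add_of_neg (B : Set (ℤ × ℤ)) (R : ℝ) (N : ℕ) (hw : w.2 < 0) :
    nbrSum (supersolution B R N) w + (lineH N \ B).indicator 1 w = 0 := by
  have hline : w ∉ lineH N \ B := fun h => by
    have hwN : w.2 = N := h.1
    omega
  rw [Set.indicator_of_notMem hline, add_zero]
  refine Finset.sum_eq_zero fun d hd => supersolution_of_nonpos B R N ?_
  have := abs_le.1 (abs_le_one_of_mem_dirs hd).2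
  rw [Prod.snd_add]
  omega

lemma ofReal_harm_le_nbrSum_supersolution (hc : 0 < c) (hR : Real.exp (2 / c ^ 2) ≤ R)
    (hcone : ∀ p ∉ B, 0 < p.2 → p ∈ cone c R ∧ ∀ d ∈ dirs, p + d ∈ cone c R)
    {N : ℕ} (hN : N ≠ 0) (x : ℤ × ℤ) :
    ENNReal.ofReal (harm B N x) ≤ nbrSum (supersolution B R N) x := by
  refine ofReal_harm_le_nbrSum hN (fun w hw => ?_) x
  obtain ⟨hwB, hw0⟩ := not_or.1 hw
  rcases lt_or_gt_of_ne hw0 with hneg | hpos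
  · simp [nbrSum_supersolution_add_of_neg B R N hneg]
  · exact nbrSum_supersolution_add_le_of_pos hc hR (hcone w hwB hpos) N hwB hpos

lemma harm_le_div_log (hc : 0 < c) (hR : Real.exp (2 / c ^ 2) ≤ R)
    (hcone : ∀ p ∉ B, 0 < p.2 → p ∈ cone c R ∧ ∀ d ∈ dirs, p + d ∈ cone c R)
    {N : ℕ} (hN : N ≠ 0) (x : ℤ × ℤ) :
    harm B N x ≤ 2 / Real.log (N + R) * nbrSum (fun p => |logBarrier p.1 (p.2 + R)|) x := by
  have hR1 := one_lt_of_exp_le hc hR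
  have hlog : 0 ≤ Real.log (N + R) := Real.log_nonneg (by linarith [N.cast_nonneg (α := ℝ)])
  have habs (p : ℤ × ℤ) : 0 ≤ 2 / Real.log (N + R) * |logBarrier p.1 (p.2 + R)| := by positivity
  have hle (p : ℤ × ℤ) : supersolution B R N p ≤
      ENNReal.ofReal (2 / Real.log (N + R) * |logBarrier p.1 (p.2 + R)|) := by
    grw [supersolution_le, cappedBarrier_le_barrier, le_abs_self (logBarrier _ _)]
  rw [← nbrSum_const_mul, ← ENNReal.ofReal_le_ofReal_iff (nbrSum_nonneg fun _ _ => habs _),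
    ← nbrSum_ofReal fun _ _ => habs _]
  exact (ofReal_harm_le_nbrSum_supersolution hc hR hcone hN x).trans (nbrSum_mono hle x)

end Comparison

theorem harm_eq_zero_of_superLinear_general {B : Set (ℤ × ℤ)} (hgrowth : HorizontalSuperLinear B)
    (x : ℤ × ℤ) : (fun N : ℕ => harm B N x) =O[atTop] fun N : ℕ => (Real.log N)⁻¹ := by
  obtain ⟨c, hc, R, hR, hcone⟩ := hgrowth.exists_cone
  have hR1 := one_lt_of_exp_le hc hR
  set K := nbrSum (fun p => |logBarrier p.1 (p.2 + R)|) x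
  have hK : 0 ≤ K := nbrSum_nonneg fun _ _ => abs_nonneg _
  refine Asymptotics.IsBigO.of_bound (2 * K) ?_
  filter_upwards [eventually_ge_atTop 2] with N hN
  have hN1 : (1 : ℝ) < N := by exact_mod_cast hN
  have hlog : 0 < Real.log N := Real.log_pos hN1
  rw [Real.norm_of_nonneg (harm_nonneg B N x), Real.norm_of_nonneg (inv_nonneg.2 hlog.le)]
  calc harm B N x ≤ 2 / Real.log (N + R) * K := harm_le_div_log hc hR hcone (by omega) x
    _ ≤ 2 / Real.log N * K := by
        gcongr
        linarith
    _ = 2 * K * (Real.log N)⁻¹ := by ring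

/-- **Theorem 1.** If `B ⊂ ℍ` has horizontal super-linear growth, then `H_B(x) = 0`
for every `x ∈ B`. -/
theorem harm_eq_zero_of_superLinear (B : Set (ℤ × ℤ)) (hB : B ⊆ upperH)
    (hgrowth : HorizontalSuperLinear B) (x : ℤ × ℤ) (hx : x ∈ B) :
    Tendsto (fun N : ℕ => harm B N x) atTop (nhds 0) :=
  (harm_eq_zero_of_superLinear_general hgrowth x).trans_tendsto
    (Real.tendsto_log_atTop.comp tendsto_natCast_atTop_atTop).inv_tendsto_atTop

end SHM
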